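/- In the setting above, the sublattice M admits the following explicit description: M = { (a+b)·w + 2b·w' + (0,x) : a, b ∈ (1/2)ℤ with a − b ∈ ℤ, and x ∈ ℚ⁸ with x − 2a·r ∈ ℤ⁸ }. -/

import Mathlib

/-!
STATEMENT 14: In the level-2 setting (Cases A and B), the sublattice
`M = {λ ∈ Λ' : ⟨λ,v⟩ = 0, ⟨λ,v'⟩ = 0}` equals
`{(a+b)w + 2b w' + (0,x) : a,b ∈ (1/2)ℤ, a − b ∈ ℤ, x − 2a·r ∈ ℤ⁸}`.
-/

noncomputable section
namespace Stmt14

/-- The bilinear form of K = U(2) ⊕ U(2) on ℚ⁴ (ℚ-bilinear extension):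
Gram matrix has blocks [[0,2],[2,0]] and [[0,2],[2,0]]. -/
def bK (x y : Fin 4 → ℚ) : ℚ :=
  2 * (x 0 * y 1 + x 1 * y 0) + 2 * (x 2 * y 3 + x 3 * y 2)

/-- The bilinear form of E = E8(2) on ℚ⁸ (ℚ-bilinear extension):
Gram matrix is −2 times the E8 Cartan matrix. -/
def bE (x y : Fin 8 → ℚ) : ℚ :=
  ∑ i : Fin 8, ∑ j : Fin 8, x i * ((-2 * CartanMatrix.E₈ i j : ℤ) : ℚ) * y j

/-- `x` lies in the lattice ℤ⁴ ⊂ ℚ⁴. -/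
def isInt4 (x : Fin 4 → ℚ) : Prop := ∀ i, ∃ n : ℤ, x i = n

/-- `x` lies in the lattice ℤ⁸ ⊂ ℚ⁸. -/
def isInt8 (x : Fin 8 → ℚ) : Prop := ∀ i, ∃ n : ℤ, x i = n

/-- `x` lies in the dual lattice (1/2)ℤ⁴ ⊂ ℚ⁴ of K. -/
def isHalf4 (x : Fin 4 → ℚ) : Prop := ∀ i, ∃ n : ℤ, x i = n / 2

/-- `x` lies in the dual lattice (1/2)ℤ⁸ ⊂ ℚ⁸ of E. -/
def isHalf8 (x : Fin 8 → ℚ) : Prop := ∀ i, ∃ n : ℤ, x i = n / 2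

/-- The ambient space ℚ⁴ ⊕ ℚ⁸ of K ⊕ E. -/
abbrev V : Type := (Fin 4 → ℚ) × (Fin 8 → ℚ)

/-- The orthogonal direct sum form of K ⊕ E on ℚ⁴ ⊕ ℚ⁸. -/
def bV (x y : V) : ℚ := bK x.1 y.1 + bE x.2 y.2

/-- Membership in the lattice Λ' = ℤ·(d₁,d₂) + (ℤ⁴ ⊕ ℤ⁸) ⊂ ℚ⁴ ⊕ ℚ⁸. -/
def memL (d₁ : Fin 4 → ℚ) (d₂ : Fin 8 → ℚ) (x : V) : Prop :=
  ∃ n : ℤ, isInt4 (x.1 - (n : ℚ) • d₁) ∧ isInt8 (x.2 - (n : ℚ) • d₂)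

/-- `v = ((1,0,0,0), 0)`. -/
def v : V := (![1, 0, 0, 0], 0)

/-- `w = ((0,0,−1,0), 0)`. -/
def w : V := (![0, 0, -1, 0], 0)

/-!
Cases A and B are the members `ε = 0` and `ε = 1` of a family indexed by an integer `ε`.
Writing `y = (y₀, y₁, y₂, y₃)`, orthogonality of `(y, x)` to `v` and `v'` amounts to `y₁ = 0` and
`y₀ = -ε y₃`, so an orthogonal vector is `((ε b, 0, -a, -b), x) = (a + b) w + 2b w' + (0, x)` with
`a = -y₂` and `b = -y₃` free. It lies in `Λ'` iff for some `n : ℤ` both `a` and `b` are congruent to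
`-n/2` modulo `ℤ` and `x - n r` is integral. As `2 r` is integral, only the parity of `n` matters in
the last condition, and `n` has the parity of `2a`.
-/

/-- The `K`-component `d₁ = (ε/2, 0, 1/2, 1/2)` of the glue vector generating `Λ'` over `K ⊕ E`;
Case A is `ε = 0` and Case B is `ε = 1`. -/
def glueVec (ε : ℚ) : Fin 4 → ℚ := ![ε / 2, 0, 1 / 2, 1 / 2]

/-- The isotropic vector `v' = ((0, 1, ε, 0), 0)`; together with `v` it cuts out the sublattice `M`
of `Λ'`. -/
def isotropicVec (ε : ℚ) : V := (![0, 1, ε, 0], 0)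

/-- The vector `w' = ((ε/2, 0, 1/2, -1/2), 0)`, which together with `w` spans the orthogonal
complement of `v` and `v'` in `K ⊗ ℚ`. -/
def perpVec (ε : ℚ) : V := (![ε / 2, 0, 1 / 2, -(1 / 2)], 0)

lemma bE_zero_right (x : Fin 8 → ℚ) : bE x 0 = 0 := by
  simp [bE]

lemma bV_v (y : V) : bV y v = 2 * y.1 1 := by
  simp [bV, bK, v, bE_zero_right]

lemma bV_isotropicVec (ε : ℚ) (y : V) : bV y (isotropicVec ε) = 2 * (y.1 0 + ε * y.1 3) := by
  simp only [bV, bK, isotropicVec, bE_zero_right, Matrix.cons_val]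
  ring

lemma smul_w_add_smul_perpVec_add (ε a b : ℚ) (x : Fin 8 → ℚ) :
    (a + b) • w + (2 * b) • perpVec ε + ((0 : Fin 4 → ℚ), x) = (![ε * b, 0, -a, -b], x) := by
  refine Prod.ext (funext fun i ↦ ?_) (by simp [w, perpVec])
  fin_cases i <;> simp [w, perpVec] <;> ring

lemma bV_v_eq_zero_and_bV_isotropicVec_eq_zero_iff (ε : ℚ) (y : V) :
    bV y v = 0 ∧ bV y (isotropicVec ε) = 0 ↔
      ∃ (a b : ℚ) (x : Fin 8 → ℚ),
        y = (a + b) • w + (2 * b) • perpVec ε + ((0 : Fin 4 → ℚ), x) := by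
  simp only [bV_v, bV_isotropicVec, smul_w_add_smul_perpVec_add]
  constructor
  · rintro ⟨h₁, h₀⟩
    refine ⟨-y.1 2, -y.1 3, y.2, Prod.ext (funext fun i ↦ ?_) rfl⟩
    fin_cases i <;> simp <;> linarith
  · rintro ⟨a, b, x, rfl⟩
    simp

lemma isInt8.add {x y : Fin 8 → ℚ} (hx : isInt8 x) (hy : isInt8 y) : isInt8 (x + y) := by
  intro i
  obtain ⟨m, hm⟩ := hx i
  obtain ⟨n, hn⟩ := hy i
  exact ⟨m + n, by simp [hm, hn]⟩

lemma isHalf8.isInt8_two_mul_smul {r : Fin 8 → ℚ} (hr : isHalf8 r) (k : ℤ) :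
    isInt8 ((2 * k : ℚ) • r) := by
  intro i
  obtain ⟨m, hm⟩ := hr i
  refine ⟨k * m, ?_⟩
  simp only [Pi.smul_apply, smul_eq_mul, hm, Int.cast_mul]
  ring

lemma isInt8_sub_smul_of_modEq {r x : Fin 8 → ℚ} (hr : isHalf8 r) {p q : ℤ}
    (hpq : p ≡ q [ZMOD 2]) (hx : isInt8 (x - (p : ℚ) • r)) : isInt8 (x - (q : ℚ) • r) := by
  obtain ⟨k, hk⟩ := hpq.symm.dvd
  have hk' : (p : ℚ) = q + 2 * k := by exact_mod_cast eq_add_of_sub_eq' hk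
  have hsplit : x - (q : ℚ) • r = (x - (p : ℚ) • r) + (2 * k : ℚ) • r := by
    rw [hk']
    module
  exact hsplit ▸ hx.add (hr.isInt8_two_mul_smul k)

lemma vec_sub_smul_glueVec (ε a b t : ℚ) :
    ![ε * b, 0, -a, -b] - t • glueVec ε =
      ![ε * (b + t / 2 - t), 0, -(a + t / 2), -(b + t / 2)] := by
  ext i
  fin_cases i <;> simp [glueVec] <;> ring

lemma isInt4_vec_sub_smul_glueVec_iff (ε n : ℤ) (a b : ℚ) :
    isInt4 (![ε * b, 0, -a, -b] - (n : ℚ) • glueVec ε) ↔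
      (∃ k : ℤ, a + n / 2 = k) ∧ ∃ l : ℤ, b + n / 2 = l := by
  rw [vec_sub_smul_glueVec]
  constructor
  · intro h
    obtain ⟨k, hk : -(a + n / 2) = (k : ℚ)⟩ := h 2
    obtain ⟨l, hl : -(b + n / 2) = (l : ℚ)⟩ := h 3
    exact ⟨⟨-k, by simp [← hk]⟩, ⟨-l, by simp [← hl]⟩⟩
  · rintro ⟨⟨k, hk⟩, l, hl⟩ i
    rw [hk, hl]
    fin_cases i
    exacts [⟨ε * (l - n), by simp⟩, ⟨0, by simp⟩, ⟨-k, by simp⟩, ⟨-l, by simp⟩]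

lemma memL_glueVec_iff {r : Fin 8 → ℚ} (hr : isHalf8 r) (ε : ℤ) (a b : ℚ) (x : Fin 8 → ℚ) :
    memL (glueVec ε) r ((a + b) • w + (2 * b) • perpVec ε + ((0 : Fin 4 → ℚ), x)) ↔
      (∃ m : ℤ, a = m / 2) ∧ (∃ m : ℤ, b = m / 2) ∧ (∃ m : ℤ, a - b = m) ∧
        isInt8 (x - (2 * a) • r) := by
  simp only [smul_w_add_smul_perpVec_add, memL, isInt4_vec_sub_smul_glueVec_iff]
  constructor
  · rintro ⟨n, ⟨⟨k, hk⟩, l, hl⟩, hx⟩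
    have two_mul_a : 2 * a = ((2 * k - n : ℤ) : ℚ) := by push_cast; linarith
    have parity : n ≡ 2 * k - n [ZMOD 2] := Int.modEq_iff_dvd.2 ⟨k - n, by ring⟩
    refine ⟨⟨2 * k - n, by linarith⟩, ⟨2 * l - n, by push_cast; linarith⟩,
      ⟨k - l, by push_cast; linarith⟩, ?_⟩
    exact two_mul_a ▸ isInt8_sub_smul_of_modEq hr parity hx
  · rintro ⟨⟨m, rfl⟩, -, ⟨t, ht⟩, hx⟩
    refine ⟨m, ⟨⟨m, by ring⟩, m - t, by push_cast; linarith⟩, ?_⟩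
    rwa [mul_div_cancel₀ (m : ℚ) two_ne_zero] at hx

theorem statement14_general {r : Fin 8 → ℚ} (hr : isHalf8 r) (ε : ℤ) (y : V) :
    (memL (glueVec ε) r y ∧ bV y v = 0 ∧ bV y (isotropicVec ε) = 0) ↔
      ∃ a b : ℚ, (∃ m : ℤ, a = m / 2) ∧ (∃ m : ℤ, b = m / 2) ∧ (∃ m : ℤ, a - b = m) ∧
        ∃ x : Fin 8 → ℚ, isInt8 (x - (2 * a) • r) ∧
          y = (a + b) • w + (2 * b) • perpVec ε + ((0 : Fin 4 → ℚ), x) := by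
  rw [bV_v_eq_zero_and_bV_isotropicVec_eq_zero_iff]
  constructor
  · rintro ⟨hy, a, b, x, rfl⟩
    obtain ⟨ha, hb, hab, hx⟩ := (memL_glueVec_iff hr ε a b x).1 hy
    exact ⟨a, b, ha, hb, hab, x, hx, rfl⟩
  · rintro ⟨a, b, ha, hb, hab, x, hx, rfl⟩
    exact ⟨(memL_glueVec_iff hr ε a b x).2 ⟨ha, hb, hab, hx⟩, a, b, x, rfl⟩

theorem statement14 (r : Fin 8 → ℚ)
    (hr : isHalf8 r) (hr' : ¬ isInt8 r) (hrr : bE r r = -1)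
    (d₁ : Fin 4 → ℚ) (v' w' : V)
    (hcase :
      (d₁ = ![0, 0, 1/2, 1/2] ∧ v' = ((![0, 1, 0, 0] : Fin 4 → ℚ), 0) ∧
        w' = ((![0, 0, 1/2, -(1/2)] : Fin 4 → ℚ), 0)) ∨
      (d₁ = ![1/2, 0, 1/2, 1/2] ∧ v' = ((![0, 1, 1, 0] : Fin 4 → ℚ), 0) ∧
        w' = ((![1/2, 0, 1/2, -(1/2)] : Fin 4 → ℚ), 0))) :
    ∀ y : V,
      (memL d₁ r y ∧ bV y v = 0 ∧ bV y v' = 0) ↔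
      ∃ a b : ℚ, (∃ m : ℤ, a = m / 2) ∧ (∃ m : ℤ, b = m / 2) ∧ (∃ m : ℤ, a - b = m) ∧
        ∃ x : Fin 8 → ℚ, isInt8 (x - (2 * a) • r) ∧
          y = (a + b) • w + (2 * b) • w' + ((0 : Fin 4 → ℚ), x) := by
  rcases hcase with ⟨rfl, rfl, rfl⟩ | ⟨rfl, rfl, rfl⟩
  · simpa [glueVec, isotropicVec, perpVec] using statement14_general hr 0
  · simpa [glueVec, isotropicVec, perpVec] using statement14_general hr 1

end Stmt14
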